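/- arXiv:1803.02386 — 4 statements merged into one kernel-verified Lean document; each statement's English description precedes it below -/
import Mathlib

section
/- Let g, h, z : ℝ → ℝ be functions that are nonnegative on (0, ∞), with z continuous on [0, ∞) and differentiable on (0, ∞), and with g, h and z integrable on every bounded subinterval of (0, ∞). Assume that z'(t) ≤ g(t)·z(t) + h(t) for every t > 0. Let r > 0 and suppose there exist constants a₁, a₂, a₃ ≥ 0 such that for every t ≥ 0 one has ∫_t^{t+r} g(s) ds ≤ a₁, ∫_t^{t+r} h(s) ds ≤ a₂, and ∫_t^{t+r} z(s) ds ≤ a₃. Then for every t ≥ 0, z(t + r) ≤ (a₂ + a₃/r) · exp(a₁). -/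
open MeasureTheory Set

/-!
For `t < s ≤ t + r`, Gronwall's inequality on `[s, t + r]` gives
`z (t + r) ≤ (z s + ∫ h) * exp (∫ g)`, and `s` can be chosen so that `z s` is at most the mean value
of `z` over the window, hence at most `a₃ / r`.

The derivative `z'` may fail to be integrable, so Gronwall's inequality goes through its integral
form: the one-sided fundamental theorem of calculus turns `z' ≤ g z + h` into `z x ≤ C + ∫ g z`,
and then `(C + ∫ g z) * exp (-∫ g)` is absolutely continuous with derivative `≤ 0` almost
everywhere, so it does not exceed its initial value `C`.
-/

theorem absolutelyContinuousOnInterval_comp_of_lipschitzOnWith {X Y : Type*}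
    [PseudoMetricSpace X] [PseudoMetricSpace Y] {φ : X → Y} {f : ℝ → X} {a b : ℝ} {K : NNReal}
    (hφ : LipschitzOnWith K φ (f '' uIcc a b)) (hf : AbsolutelyContinuousOnInterval f a b) :
    AbsolutelyContinuousOnInterval (fun x => φ (f x)) a b := by
  unfold AbsolutelyContinuousOnInterval at hf ⊢
  refine squeeze_zero' (.of_forall fun _ => Finset.sum_nonneg fun _ _ => dist_nonneg) ?_
    (by simpa only [mul_zero] using hf.const_mul (K : ℝ))
  rw [Filter.eventually_inf_principal]
  filter_upwards with ⟨n, I⟩ hI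
  rw [Finset.mul_sum]
  gcongr with i hi
  obtain ⟨hleft, hright⟩ := hI.1 i hi
  exact hφ.dist_le_mul _ (mem_image_of_mem f hleft) _ (mem_image_of_mem f hright)

theorem absolutelyContinuousOnInterval_comp_of_contDiff {E F : Type*}
    [NormedAddCommGroup E] [NormedSpace ℝ E] [NormedAddCommGroup F] [NormedSpace ℝ F]
    {φ : E → F} {f : ℝ → E} {a b : ℝ}
    (hφ : ContDiff ℝ 1 φ) (hf : AbsolutelyContinuousOnInterval f a b) :
    AbsolutelyContinuousOnInterval (fun x => φ (f x)) a b := by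
  have hcompact : IsCompact (f '' uIcc a b) := isCompact_uIcc.image_of_continuousOn hf.continuousOn
  obtain ⟨K, hK⟩ :=
    hφ.locallyLipschitz.locallyLipschitzOn.exists_lipschitzOnWith_of_compact hcompact
  exact absolutelyContinuousOnInterval_comp_of_lipschitzOnWith hK hf

theorem le_of_absolutelyContinuousOnInterval_of_ae_deriv_nonpos {f : ℝ → ℝ} {a b : ℝ}
    (hab : a ≤ b) (hf : AbsolutelyContinuousOnInterval f a b)
    (hderiv : ∀ᵐ x, x ∈ Ioo a b → deriv f x ≤ 0) :
    f b ≤ f a := by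
  rw [← sub_nonpos, ← hf.integral_deriv_eq_sub, intervalIntegral.integral_of_le hab,
    integral_Ioc_eq_integral_Ioo]
  exact integral_nonpos_of_ae ((ae_restrict_iff' measurableSet_Ioo).2 hderiv)

theorem intervalIntegral_mono_interval_of_nonneg_on_Ioo {f : ℝ → ℝ} {a b c d : ℝ}
    (hca : c ≤ a) (hab : a ≤ b) (hbd : b ≤ d) (hf : ∀ x ∈ Ioo c d, 0 ≤ f x)
    (hf_int : IntervalIntegrable f volume c d) :
    ∫ x in a..b, f x ≤ ∫ x in c..d, f x := by
  refine intervalIntegral.integral_mono_interval hca hab hbd ?_ hf_int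
  rw [← restrict_Ioo_eq_restrict_Ioc]
  exact ae_restrict_of_forall_mem measurableSet_Ioo hf

theorem exists_mem_Ioc_le_integral_div {f : ℝ → ℝ} {a b : ℝ} (hab : a < b)
    (hf_int : IntervalIntegrable f volume a b) :
    ∃ s ∈ Ioc a b, f s ≤ (∫ x in a..b, f x) / (b - a) := by
  rw [← interval_average_eq_div, uIoc_of_le hab.le]
  exact exists_le_setAverage (by simp [hab]) (by simp) hf_int.1

section Gronwall

variable {g h z z' : ℝ → ℝ} {a b : ℝ}

theorem le_mul_exp_integral_of_le_add_integral_mul {C : ℝ} (hab : a ≤ b)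
    (hg_nonneg : ∀ x ∈ Ioo a b, 0 ≤ g x)
    (hg_int : IntervalIntegrable g volume a b)
    (hgz_int : IntervalIntegrable (fun x => g x * z x) volume a b)
    (hz_le : ∀ x ∈ Icc a b, z x ≤ C + ∫ y in a..x, g y * z y) :
    z b ≤ C * Real.exp (∫ x in a..b, g x) := by
  set G : ℝ → ℝ := fun x => ∫ y in a..x, g y with hG
  set P : ℝ → ℝ := fun x => C + ∫ y in a..x, g y * z y with hP
  have hG_ac : AbsolutelyContinuousOnInterval G a b :=
    hg_int.absolutelyContinuousOnInterval_intervalIntegral left_mem_uIcc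
  have hP_ac : AbsolutelyContinuousOnInterval P a b :=
    contDiffOn_const.absolutelyContinuousOnInterval.fun_add
      (hgz_int.absolutelyContinuousOnInterval_intervalIntegral left_mem_uIcc)
  have hF_ac : AbsolutelyContinuousOnInterval (fun x => P x * Real.exp (-G x)) a b :=
    hP_ac.fun_mul (absolutelyContinuousOnInterval_comp_of_contDiff Real.contDiff_exp hG_ac.fun_neg)
  have hF_deriv : ∀ᵐ x, x ∈ Ioo a b → deriv (fun x => P x * Real.exp (-G x)) x ≤ 0 := by
    filter_upwards [hg_int.ae_hasDerivAt_integral, hgz_int.ae_hasDerivAt_integral]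
      with x hg_deriv hgz_deriv hx
    have hx_mem : x ∈ uIcc a b := Icc_subset_uIcc (Ioo_subset_Icc_self hx)
    have hG_deriv : HasDerivAt G (g x) x := hg_deriv hx_mem a left_mem_uIcc
    have hP_deriv : HasDerivAt P (g x * z x) x := (hgz_deriv hx_mem a left_mem_uIcc).const_add C
    calc deriv (fun x => P x * Real.exp (-G x)) x
        = g x * (z x - P x) * Real.exp (-G x) := by
          rw [(hP_deriv.fun_mul hG_deriv.fun_neg.exp).deriv]; ring
      _ ≤ 0 := mul_nonpos_of_nonpos_of_nonneg
          (mul_nonpos_of_nonneg_of_nonpos (hg_nonneg x hx)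
            (sub_nonpos.2 (hz_le x (Ioo_subset_Icc_self hx)))) (Real.exp_nonneg _)
  have hF_le : P b * Real.exp (-G b) ≤ C := by
    simpa [hG, hP] using
      le_of_absolutelyContinuousOnInterval_of_ae_deriv_nonpos hab hF_ac hF_deriv
  calc z b ≤ P b := hz_le b (right_mem_Icc.2 hab)
    _ = P b * Real.exp (-G b) * Real.exp (G b) := by
      rw [mul_assoc, ← Real.exp_add, neg_add_cancel, Real.exp_zero, mul_one]
    _ ≤ C * Real.exp (G b) := by gcongr

theorem le_add_integral_mul_exp_integral_of_deriv_right_le (hab : a ≤ b)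
    (hg_nonneg : ∀ x ∈ Ioo a b, 0 ≤ g x) (hh_nonneg : ∀ x ∈ Ioo a b, 0 ≤ h x)
    (hz_cont : ContinuousOn z (Icc a b))
    (hz_deriv : ∀ x ∈ Ioo a b, HasDerivWithinAt z (z' x) (Ioi x) x)
    (hg_int : IntervalIntegrable g volume a b) (hh_int : IntervalIntegrable h volume a b)
    (hineq : ∀ x ∈ Ioo a b, z' x ≤ g x * z x + h x) :
    z b ≤ (z a + ∫ x in a..b, h x) * Real.exp (∫ x in a..b, g x) := by
  have hgz_int : IntervalIntegrable (fun x => g x * z x) volume a b :=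
    hg_int.mul_continuousOn (by rwa [uIcc_of_le hab])
  refine le_mul_exp_integral_of_le_add_integral_mul hab hg_nonneg hg_int hgz_int ?_
  rintro x ⟨hax, hxb⟩
  have hsub : Ioo a x ⊆ Ioo a b := Ioo_subset_Ioo_right hxb
  have hsub_uIcc : uIcc a x ⊆ uIcc a b := uIcc_subset_uIcc_left (mem_uIcc_of_le hax hxb)
  have hgz_int_x := hgz_int.mono_set hsub_uIcc
  have hh_int_x := hh_int.mono_set hsub_uIcc
  have hftc : z x - z a ≤ ∫ y in a..x, (g y * z y + h y) :=
    intervalIntegral.sub_le_integral_of_hasDeriv_right_of_le hax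
      (hz_cont.mono (Icc_subset_Icc_right hxb)) (fun y hy => hz_deriv y (hsub hy))
      ((intervalIntegrable_iff_integrableOn_Icc_of_le hax).1 (hgz_int_x.add hh_int_x))
      (fun y hy => hineq y (hsub hy))
  rw [intervalIntegral.integral_add hgz_int_x hh_int_x] at hftc
  have hh_le : ∫ y in a..x, h y ≤ ∫ y in a..b, h y :=
    intervalIntegral_mono_interval_of_nonneg_on_Ioo le_rfl hax hxb hh_nonneg hh_int
  linarith

theorem uniform_gronwall_general {t r a₁ a₂ a₃ : ℝ} (hr : 0 < r) (ha₃ : 0 ≤ a₃)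
    (hg_nonneg : ∀ x ∈ Ioo t (t + r), 0 ≤ g x) (hh_nonneg : ∀ x ∈ Ioo t (t + r), 0 ≤ h x)
    (hz_cont : ContinuousOn z (Ioc t (t + r)))
    (hz_deriv : ∀ x ∈ Ioo t (t + r), HasDerivWithinAt z (z' x) (Ioi x) x)
    (hg_int : IntervalIntegrable g volume t (t + r))
    (hh_int : IntervalIntegrable h volume t (t + r))
    (hz_int : IntervalIntegrable z volume t (t + r))
    (hineq : ∀ x ∈ Ioo t (t + r), z' x ≤ g x * z x + h x)
    (hGa : ∫ x in t..(t + r), g x ≤ a₁) (hHa : ∫ x in t..(t + r), h x ≤ a₂)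
    (hZa : ∫ x in t..(t + r), z x ≤ a₃) :
    z (t + r) ≤ (a₂ + a₃ / r) * Real.exp a₁ := by
  have htr : t < t + r := lt_add_of_pos_right t hr
  obtain ⟨s, ⟨hts, hsr⟩, hzs⟩ := exists_mem_Ioc_le_integral_div htr hz_int
  have hsub : Ioo s (t + r) ⊆ Ioo t (t + r) := Ioo_subset_Ioo_left hts.le
  have hsub_uIcc : uIcc s (t + r) ⊆ uIcc t (t + r) :=
    uIcc_subset_uIcc_right (mem_uIcc_of_le hts.le hsr)
  have hzs_le : z s ≤ a₃ / r := by
    rw [add_sub_cancel_left] at hzs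
    exact hzs.trans (by gcongr)
  have hG_le : ∫ x in s..(t + r), g x ≤ a₁ :=
    (intervalIntegral_mono_interval_of_nonneg_on_Ioo hts.le hsr le_rfl hg_nonneg hg_int).trans hGa
  have hH_le : ∫ x in s..(t + r), h x ≤ a₂ :=
    (intervalIntegral_mono_interval_of_nonneg_on_Ioo hts.le hsr le_rfl hh_nonneg hh_int).trans hHa
  have ha₂ : 0 ≤ a₂ := by
    simpa only [intervalIntegral.integral_same] using
      (intervalIntegral_mono_interval_of_nonneg_on_Ioo le_rfl le_rfl htr.le hh_nonneg hh_int).trans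
        hHa
  calc z (t + r)
      ≤ (z s + ∫ x in s..(t + r), h x) * Real.exp (∫ x in s..(t + r), g x) :=
        le_add_integral_mul_exp_integral_of_deriv_right_le hsr
          (fun x hx => hg_nonneg x (hsub hx)) (fun x hx => hh_nonneg x (hsub hx))
          (hz_cont.mono (Icc_subset_Ioc_left hts)) (fun x hx => hz_deriv x (hsub hx))
          (hg_int.mono_set hsub_uIcc) (hh_int.mono_set hsub_uIcc)
          (fun x hx => hineq x (hsub hx))
    _ ≤ (a₂ + a₃ / r) * Real.exp (∫ x in s..(t + r), g x) := by
        gcongr ?_ * _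
        rw [add_comm]
        exact add_le_add hH_le hzs_le
    _ ≤ (a₂ + a₃ / r) * Real.exp a₁ := by gcongr

end Gronwall

/-- **Uniform Gronwall Lemma.** If `z' ≤ g z + h` on `(0, ∞)`, the functions are
nonnegative there, locally integrable, and the sliding-window integrals of `g`, `h`, `z`
over intervals of length `r` are bounded by `a₁`, `a₂`, `a₃`, then
`z (t + r) ≤ (a₂ + a₃ / r) * exp a₁` for all `t ≥ 0`. -/
theorem uniform_gronwall
    (g h z z' : ℝ → ℝ)
    (hg_nonneg : ∀ t : ℝ, 0 < t → 0 ≤ g t)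
    (hh_nonneg : ∀ t : ℝ, 0 < t → 0 ≤ h t)
    (hz_nonneg : ∀ t : ℝ, 0 < t → 0 ≤ z t)
    (hz_cont : ContinuousOn z (Ici (0 : ℝ)))
    (hz_deriv : ∀ t : ℝ, 0 < t → HasDerivAt z (z' t) t)
    (hg_int : ∀ a b : ℝ, 0 ≤ a → a ≤ b → IntervalIntegrable g volume a b)
    (hh_int : ∀ a b : ℝ, 0 ≤ a → a ≤ b → IntervalIntegrable h volume a b)
    (hz_int : ∀ a b : ℝ, 0 ≤ a → a ≤ b → IntervalIntegrable z volume a b)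
    (hineq : ∀ t : ℝ, 0 < t → z' t ≤ g t * z t + h t)
    (r : ℝ) (hr : 0 < r)
    (a₁ a₂ a₃ : ℝ) (ha₁ : 0 ≤ a₁) (ha₂ : 0 ≤ a₂) (ha₃ : 0 ≤ a₃)
    (hGa : ∀ t : ℝ, 0 ≤ t → (∫ s in t..(t + r), g s) ≤ a₁)
    (hHa : ∀ t : ℝ, 0 ≤ t → (∫ s in t..(t + r), h s) ≤ a₂)
    (hZa : ∀ t : ℝ, 0 ≤ t → (∫ s in t..(t + r), z s) ≤ a₃) :
    ∀ t : ℝ, 0 ≤ t → z (t + r) ≤ (a₂ + a₃ / r) * Real.exp a₁ := by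
  intro t ht
  have htr : t ≤ t + r := le_add_of_nonneg_right hr.le
  have hpos : ∀ x ∈ Ioo t (t + r), 0 < x := fun x hx => ht.trans_lt hx.1
  exact uniform_gronwall_general hr ha₃
    (fun x hx => hg_nonneg x (hpos x hx)) (fun x hx => hh_nonneg x (hpos x hx))
    (hz_cont.mono fun x hx => ht.trans hx.1.le)
    (fun x hx => (hz_deriv x (hpos x hx)).hasDerivWithinAt)
    (hg_int t _ ht htr) (hh_int t _ ht htr) (hz_int t _ ht htr)
    (fun x hx => hineq x (hpos x hx)) (hGa t ht) (hHa t ht) (hZa t ht)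
end

section
/- Let k > 0 and let d, g, h : ℕ → ℝ be sequences with dⁿ ≥ 0, gⁿ ≥ 0, hⁿ ≥ 0 for all n ≥ 0, satisfying the recursion (d^{n+1} − dⁿ)/k ≤ gⁿ·dⁿ + hⁿ for all n ≥ 0. Let r ≥ 1 be a natural number and suppose there exist constants a₁, a₂, a₃ ≥ 0 such that for every n₀ ≥ 0 one has k·∑_{n=n₀}^{n₀+r−1} gⁿ ≤ a₁, k·∑_{n=n₀}^{n₀+r−1} hⁿ ≤ a₂, and k·∑_{n=n₀}^{n₀+r−1} dⁿ ≤ a₃. Then for every n ≥ r, dⁿ ≤ (a₂ + a₃/(k·r)) · exp(a₁). -/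
/-!
Write the recursion as `u (n + 1) ≤ (1 + c n) * u n + b n` with `c = k g`, `b = k h`. Gronwall's
inequality started at any index `i` of the window `[m, m + r)` bounds `u (m + r)` by `u i` and the
sums of `b` and `c` over `[i, m + r)`, which are at most those over the whole window. Start at an
index where `u` is at most its average over the window. The factor `exp (∑ c)` makes
Gronwall's inequality fail from a negative initial value, so it is applied to the positive part of
`u`, which satisfies the same recursion.
-/

open Finset

lemma exists_le_div_card_of_sum_le {ι K : Type*} [Field K] [LinearOrder K] [IsStrictOrderedRing K]
    {s : Finset ι} {f : ι → K} {S : K} (hs : s.Nonempty) (hS : ∑ i ∈ s, f i ≤ S) :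
    ∃ i ∈ s, f i ≤ S / #s := by
  have hcard : (#s : K) ≠ 0 := Nat.cast_ne_zero.2 hs.card_ne_zero
  apply exists_le_of_sum_le hs
  rwa [sum_const, nsmul_eq_mul, mul_div_cancel₀ _ hcard]

section Gronwall

variable {u b c : ℕ → ℝ} {m r : ℕ}

lemma discrete_gronwall_posPart (hu : ∀ n ≥ m, u (n + 1) ≤ (1 + c n) * u n + b n)
    (hc : ∀ n ≥ m, 0 ≤ c n) (hb : ∀ n ≥ m, 0 ≤ b n) ⦃n : ℕ⦄ (hn : m ≤ n) :
    u n ≤ ((u m)⁺ + ∑ i ∈ Ico m n, b i) * Real.exp (∑ i ∈ Ico m n, c i) := by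
  have hu' : ∀ n ≥ m, (u (n + 1))⁺ ≤ (1 + c n) * (u n)⁺ + b n := fun n hn ↦ by
    have hcn : 0 ≤ 1 + c n := add_nonneg zero_le_one (hc n hn)
    refine sup_le ((hu n hn).trans ?_) ?_
    · gcongr
      exact le_posPart _
    · exact add_nonneg (mul_nonneg hcn (posPart_nonneg _)) (hb n hn)
  exact (le_posPart _).trans
    (discrete_gronwall (u := fun n ↦ (u n)⁺) (posPart_nonneg _) hu' hc hb hn)

lemma discrete_gronwall_of_sum_le {B C S : ℝ} (hr : 0 < r)
    (hu : ∀ n ≥ m, u (n + 1) ≤ (1 + c n) * u n + b n)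
    (hc : ∀ n ≥ m, 0 ≤ c n) (hb : ∀ n ≥ m, 0 ≤ b n)
    (hC : ∑ n ∈ Ico m (m + r), c n ≤ C) (hB : ∑ n ∈ Ico m (m + r), b n ≤ B)
    (hS : ∑ n ∈ Ico m (m + r), u n ≤ S) (hS₀ : 0 ≤ S) :
    u (m + r) ≤ (B + S / r) * Real.exp C := by
  obtain ⟨i, hi, hui⟩ : ∃ i ∈ Ico m (m + r), u i ≤ S / r := by
    simpa only [Nat.card_Ico, Nat.add_sub_cancel_left] using
      exists_le_div_card_of_sum_le (nonempty_Ico.2 (Nat.lt_add_of_pos_right hr)) hS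
  obtain ⟨hmi, hir⟩ := mem_Ico.1 hi
  have hui' : (u i)⁺ ≤ S / r := sup_le hui (by positivity)
  have sum_tail_le {f : ℕ → ℝ} (hf : ∀ n ≥ m, 0 ≤ f n) :
      ∑ n ∈ Ico i (m + r), f n ≤ ∑ n ∈ Ico m (m + r), f n :=
    sum_le_sum_of_subset_of_nonneg (Ico_subset_Ico_left hmi)
      fun n hn _ ↦ hf n (mem_Ico.1 hn).1
  have hB₀ : 0 ≤ B := (sum_nonneg fun n hn ↦ hb n (mem_Ico.1 hn).1).trans hB
  calc u (m + r)
    _ ≤ ((u i)⁺ + ∑ n ∈ Ico i (m + r), b n) * Real.exp (∑ n ∈ Ico i (m + r), c n) :=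
        discrete_gronwall_posPart (fun n hn ↦ hu n (hmi.trans hn)) (fun n hn ↦ hc n (hmi.trans hn))
          (fun n hn ↦ hb n (hmi.trans hn)) hir.le
    _ ≤ (S / r + B) * Real.exp C := by
        gcongr
        · exact (sum_tail_le hb).trans hB
        · exact (sum_tail_le hc).trans hC
    _ = (B + S / r) * Real.exp C := by rw [add_comm B]

theorem uniform_discrete_gronwall_general {k : ℝ} (hk : 0 < k) {d g h : ℕ → ℝ}
    (hg : ∀ n ≥ m, 0 ≤ g n) (hh : ∀ n ≥ m, 0 ≤ h n)
    (hrec : ∀ n ≥ m, (d (n + 1) - d n) / k ≤ g n * d n + h n)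
    (hr : 0 < r) {a₁ a₂ a₃ : ℝ} (ha₃ : 0 ≤ a₃)
    (hG : k * ∑ n ∈ Ico m (m + r), g n ≤ a₁)
    (hH : k * ∑ n ∈ Ico m (m + r), h n ≤ a₂)
    (hD : k * ∑ n ∈ Ico m (m + r), d n ≤ a₃) :
    d (m + r) ≤ (a₂ + a₃ / (k * r)) * Real.exp a₁ := by
  have hstep : ∀ n ≥ m, d (n + 1) ≤ (1 + k * g n) * d n + k * h n := fun n hn ↦ by
    linarith [(div_le_iff₀ hk).1 (hrec n hn)]
  rw [← div_div]
  rw [mul_sum] at hG hH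
  exact discrete_gronwall_of_sum_le hr hstep (fun n hn ↦ mul_nonneg hk.le (hg n hn))
    (fun n hn ↦ mul_nonneg hk.le (hh n hn)) hG hH ((le_div_iff₀' hk).2 hD)
    (div_nonneg ha₃ hk.le)

end Gronwall

/-- **Uniform discrete Gronwall lemma.** If `(d (n+1) - d n)/k ≤ g n * d n + h n` with
nonnegative sequences, and the sums of `g`, `h`, `d` over any window of `r` consecutive
indices (times `k`) are bounded by `a₁`, `a₂`, `a₃`, then
`d n ≤ (a₂ + a₃ / (k r)) * exp a₁` for all `n ≥ r`. -/
theorem uniform_discrete_gronwall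
    (k : ℝ) (hk : 0 < k) (d g h : ℕ → ℝ)
    (hd : ∀ n : ℕ, 0 ≤ d n) (hg : ∀ n : ℕ, 0 ≤ g n) (hh : ∀ n : ℕ, 0 ≤ h n)
    (hrec : ∀ n : ℕ, (d (n + 1) - d n) / k ≤ g n * d n + h n)
    (r : ℕ) (hr : 1 ≤ r)
    (a₁ a₂ a₃ : ℝ) (ha₁ : 0 ≤ a₁) (ha₂ : 0 ≤ a₂) (ha₃ : 0 ≤ a₃)
    (hG : ∀ n₀ : ℕ, k * ∑ n ∈ Finset.Ico n₀ (n₀ + r), g n ≤ a₁)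
    (hH : ∀ n₀ : ℕ, k * ∑ n ∈ Finset.Ico n₀ (n₀ + r), h n ≤ a₂)
    (hD : ∀ n₀ : ℕ, k * ∑ n ∈ Finset.Ico n₀ (n₀ + r), d n ≤ a₃) :
    ∀ n : ℕ, r ≤ n → d n ≤ (a₂ + a₃ / (k * r)) * Real.exp a₁ := by
  intro n hn
  obtain ⟨m, rfl⟩ := Nat.exists_eq_add_of_le' hn
  exact uniform_discrete_gronwall_general hk (fun n _ ↦ hg n) (fun n _ ↦ hh n)
    (fun n _ ↦ hrec n) hr ha₃ (hG m) (hH m) (hD m)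
end

section
/- Let k₀ > 0 and let a₁, a₂, a₃ : ℝ → ℝ be nonnegative and monotone nondecreasing functions. Let k ∈ (0, k₀] and let d, g, h : ℕ → ℝ be sequences with dⁿ, gⁿ, hⁿ ≥ 0 for all n ≥ 0, satisfying the recursion (d^{n+1} − dⁿ)/k ≤ gⁿ·dⁿ + hⁿ for all n ≥ 0, and such that for every integer r ≥ 1 and every n₀ ≥ 0 one has k·∑_{n=n₀}^{n₀+r−1} gⁿ ≤ a₁(k·r), k·∑_{n=n₀}^{n₀+r−1} hⁿ ≤ a₂(k·r), and k·∑_{n=n₀}^{n₀+r−1} dⁿ ≤ a₃(k·r). Then for every n ≥ 0, dⁿ ≤ (d⁰ + a₂(3k₀) + a₃(3k₀)/(2k₀)) · exp(a₁(3k₀)); in particular the sequence (dⁿ) is bounded by a constant depending only on d⁰, k₀ and the functions a₁, a₂, a₃, and independent of k and n. -/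
/-!
Let `r` be the least integer with `2k₀ ≤ kr`, so that `kr ≤ 3k₀`. The classical discrete Grönwall
inequality, run over at most `r` steps from an index `i`, bounds `d n` by
`(d i + a₂(3k₀)) exp (a₁(3k₀))`. For `n < r` start it at `i = 0`. For `n ≥ r` start it at an index
`i` of the window `[n - r, n)` where `d` does not exceed its mean over that window, which is at most
`a₃(3k₀) / (kr) ≤ a₃(3k₀) / (2k₀)`.
-/

theorem exists_nsmul_mem_Ico {α : Type*} [AddCommGroup α] [LinearOrder α] [IsOrderedAddMonoid α]
    [Archimedean α] {a b : α} (ha : 0 < a) (hb : 0 ≤ b) : ∃ n : ℕ, n • a ∈ Set.Ico b (b + a) := by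
  obtain ⟨m, hm, -⟩ := existsUnique_add_zsmul_mem_Ico ha 0 b
  rw [zero_add] at hm
  have hm_nonneg : 0 ≤ m := (zsmul_le_zsmul_iff_left ha).mp (by simpa using hb.trans hm.1)
  lift m to ℕ using hm_nonneg
  exact ⟨m, by simpa only [natCast_zsmul] using hm⟩

section DiscreteGronwall

open Finset Real

variable {u b c : ℕ → ℝ} {r : ℕ}

theorem uniform_discrete_gronwall_s2 {m : ℕ} (hr : 0 < r)
    (hu_nonneg : ∀ n ≥ m, 0 ≤ u n) (hu : ∀ n ≥ m, u (n + 1) ≤ (1 + c n) * u n + b n)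
    (hc : ∀ n ≥ m, 0 ≤ c n) (hb : ∀ n ≥ m, 0 ≤ b n) :
    u (m + r) ≤ ((∑ i ∈ Ico m (m + r), u i) / r + ∑ i ∈ Ico m (m + r), b i) *
      exp (∑ i ∈ Ico m (m + r), c i) := by
  obtain ⟨i, hi, hui⟩ : ∃ i ∈ Ico m (m + r), u i ≤ (∑ j ∈ Ico m (m + r), u j) / r := by
    refine exists_le_of_expect_le (nonempty_Ico.mpr (by omega)) ?_
    simp [expect_eq_sum_div_card]
  obtain ⟨hmi, hir⟩ := mem_Ico.mp hi
  have hui_nonneg : 0 ≤ u i := hu_nonneg i hmi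
  have hb_sum_nonneg : 0 ≤ ∑ j ∈ Ico m (m + r), b j :=
    sum_nonneg fun j hj ↦ hb j (mem_Ico.mp hj).1
  have sum_tail_le {f : ℕ → ℝ} (hf : ∀ n ≥ m, 0 ≤ f n) :
      ∑ j ∈ Ico i (m + r), f j ≤ ∑ j ∈ Ico m (m + r), f j :=
    sum_le_sum_of_subset_of_nonneg (Ico_subset_Ico_left hmi)
      fun j hj _ ↦ hf j (mem_Ico.mp hj).1
  calc u (m + r)
    _ ≤ (u i + ∑ j ∈ Ico i (m + r), b j) * exp (∑ j ∈ Ico i (m + r), c j) :=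
      discrete_gronwall hui_nonneg (fun n hn ↦ hu n (hmi.trans hn))
        (fun n hn ↦ hc n (hmi.trans hn)) (fun n hn ↦ hb n (hmi.trans hn)) hir.le
    _ ≤ ((∑ j ∈ Ico m (m + r), u j) / r + ∑ j ∈ Ico m (m + r), b j) *
          exp (∑ j ∈ Ico m (m + r), c j) := by
      gcongr ?_ * exp ?_
      · linarith
      · exact add_le_add hui (sum_tail_le hb)
      · exact sum_tail_le hc

theorem uniform_discrete_gronwall_of_sum_le {U B C : ℝ} (hr : 0 < r)
    (hu_nonneg : ∀ n, 0 ≤ u n) (hu : ∀ n, u (n + 1) ≤ (1 + c n) * u n + b n)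
    (hc : ∀ n, 0 ≤ c n) (hb : ∀ n, 0 ≤ b n)
    (hU : ∀ m, ∑ i ∈ Ico m (m + r), u i ≤ U) (hB : ∀ m, ∑ i ∈ Ico m (m + r), b i ≤ B)
    (hC : ∀ m, ∑ i ∈ Ico m (m + r), c i ≤ C) (n : ℕ) :
    u n ≤ (u 0 + B + U / r) * exp C := by
  have hu0 : 0 ≤ u 0 := hu_nonneg 0
  have hB_nonneg : 0 ≤ B := (sum_nonneg fun i _ ↦ hb i).trans (hB 0)
  have hU_nonneg : 0 ≤ U := (sum_nonneg fun i _ ↦ hu_nonneg i).trans (hU 0)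
  have hUr : 0 ≤ U / r := by positivity
  rcases lt_or_ge n r with hnr | hrn
  · calc u n
      _ ≤ (u 0 + ∑ i ∈ Ico 0 r, b i) * exp (∑ i ∈ Ico 0 r, c i) :=
        discrete_gronwall_Ico hu0 (fun i _ ↦ hu i) (fun i _ ↦ hc i) (fun i _ ↦ hb i)
          (mem_Ico.mpr ⟨n.zero_le, hnr⟩)
      _ ≤ (u 0 + B + U / r) * exp C := by
        have hB0 := hB 0
        have hC0 := hC 0
        rw [zero_add] at hB0 hC0
        gcongr ?_ * exp ?_
        linarith
  · obtain ⟨m, rfl⟩ := Nat.exists_eq_add_of_le' hrn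
    calc u (m + r)
      _ ≤ ((∑ i ∈ Ico m (m + r), u i) / r + ∑ i ∈ Ico m (m + r), b i) *
            exp (∑ i ∈ Ico m (m + r), c i) :=
        uniform_discrete_gronwall_s2 hr (fun i _ ↦ hu_nonneg i) (fun i _ ↦ hu i)
          (fun i _ ↦ hc i) (fun i _ ↦ hb i)
      _ ≤ (U / r + B) * exp C := by gcongr; exacts [hU m, hB m, hC m]
      _ ≤ (u 0 + B + U / r) * exp C := by gcongr ?_ * _; linarith

end DiscreteGronwall

/-- **Corollary 2.4.** Under the hypotheses of the uniform discrete Gronwall lemma,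
uniformly for every window length `r`, with bounds given by nondecreasing nonnegative
functions `a₁ a₂ a₃` of the window time `k·r`, and `k ≤ k₀`, the sequence `d` is bounded
by a constant depending only on `d 0`, `k₀` and `a₁, a₂, a₃`, independent of `k` and `n`. -/
theorem uniform_discrete_gronwall_cor
    (k₀ : ℝ) (hk₀ : 0 < k₀)
    (a₁ a₂ a₃ : ℝ → ℝ)
    (ha₁_nonneg : ∀ t : ℝ, 0 ≤ a₁ t) (ha₂_nonneg : ∀ t : ℝ, 0 ≤ a₂ t)
    (ha₃_nonneg : ∀ t : ℝ, 0 ≤ a₃ t)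
    (ha₁_mono : Monotone a₁) (ha₂_mono : Monotone a₂) (ha₃_mono : Monotone a₃)
    (k : ℝ) (hk : 0 < k) (hkk₀ : k ≤ k₀)
    (d g h : ℕ → ℝ)
    (hd : ∀ n : ℕ, 0 ≤ d n) (hg : ∀ n : ℕ, 0 ≤ g n) (hh : ∀ n : ℕ, 0 ≤ h n)
    (hrec : ∀ n : ℕ, (d (n + 1) - d n) / k ≤ g n * d n + h n)
    (hG : ∀ r : ℕ, 1 ≤ r → ∀ n₀ : ℕ,
      k * ∑ n ∈ Finset.Ico n₀ (n₀ + r), g n ≤ a₁ (k * r))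
    (hH : ∀ r : ℕ, 1 ≤ r → ∀ n₀ : ℕ,
      k * ∑ n ∈ Finset.Ico n₀ (n₀ + r), h n ≤ a₂ (k * r))
    (hD : ∀ r : ℕ, 1 ≤ r → ∀ n₀ : ℕ,
      k * ∑ n ∈ Finset.Ico n₀ (n₀ + r), d n ≤ a₃ (k * r)) :
    ∀ n : ℕ,
      d n ≤ (d 0 + a₂ (3 * k₀) + a₃ (3 * k₀) / (2 * k₀)) * Real.exp (a₁ (3 * k₀)) := by
  obtain ⟨r, hr_ge, hr_lt⟩ := exists_nsmul_mem_Ico hk (by positivity : 0 ≤ 2 * k₀)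
  rw [nsmul_eq_mul, mul_comm (r : ℝ)] at hr_ge hr_lt
  have hkr_le : k * r ≤ 3 * k₀ := by linarith
  have hr : 0 < r := by
    exact_mod_cast pos_of_mul_pos_right (by linarith : 0 < k * (r : ℝ)) hk.le
  intro n
  calc d n
    _ ≤ (d 0 + a₂ (3 * k₀) + a₃ (3 * k₀) / k / r) * Real.exp (a₁ (3 * k₀)) := by
      refine uniform_discrete_gronwall_of_sum_le (b := fun i ↦ k * h i) (c := fun i ↦ k * g i) hr
        hd (fun i ↦ ?_) (fun i ↦ mul_nonneg hk.le (hg i)) (fun i ↦ mul_nonneg hk.le (hh i))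
        (fun m ↦ ?_) (fun m ↦ ?_) (fun m ↦ ?_) n
      · linarith [(div_le_iff₀ hk).mp (hrec i)]
      · exact (le_div_iff₀' hk).mpr ((hD r hr m).trans (ha₃_mono hkr_le))
      · simpa only [Finset.mul_sum] using (hH r hr m).trans (ha₂_mono hkr_le)
      · simpa only [Finset.mul_sum] using (hG r hr m).trans (ha₁_mono hkr_le)
    _ ≤ (d 0 + a₂ (3 * k₀) + a₃ (3 * k₀) / (2 * k₀)) * Real.exp (a₁ (3 * k₀)) := by
      rw [div_div]
      gcongr
      exact ha₃_nonneg _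
end

section
/- Let H be a real normed vector space, k > 0, N ≥ 1 a natural number, and x₀, x₁, …, x_N ∈ H. Set tₙ = n·k. Define ũ : [0, N·k] → H as the continuous piecewise-linear interpolant with ũ(tₙ) = xₙ for each n (so ũ(t) = xₙ + ((tₙ − t)/k)·(x_{n−1} − xₙ) for t ∈ [t_{n−1}, tₙ]), and define uʳ : (0, N·k] → H as the piecewise-constant function equal to xₙ on (t_{n−1}, tₙ]. Then ∫₀^{N·k} ‖ũ(t) − uʳ(t)‖² dt = (k/3)·∑_{n=1}^{N} ‖xₙ − x_{n−1}‖². Consequently, if k²·∑_{n=1}^{N} ‖(xₙ − x_{n−1})/k‖² ≤ C₀, then ∫₀^{N·k} ‖ũ(t) − uʳ(t)‖² dt ≤ C₀·k/3. -/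
/-!
On a mesh cell `(a, b]` the two interpolants differ by the linear ramp `((b - s) / (b - a)) • d`,
where `-d` is the increment of the nodal values across the cell. Hence the `p`-th power of the norm
of the difference integrates to `(b - a) / (p + 1) * ‖d‖ ^ p` over the cell, and summing over
adjacent cells gives the identity on any mesh. The bound rests on
`(b - a) ^ p * ‖(b - a)⁻¹ • d‖ ^ p = ‖d‖ ^ p`.
-/

theorem integral_ramp_pow (a b : ℝ) (p : ℕ) :
    ∫ s in a..b, ((b - s) / (b - a)) ^ p = (b - a) / (p + 1) := by
  rcases eq_or_ne a b with rfl | hab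
  · simp
  have hba : b - a ≠ 0 := sub_ne_zero.mpr hab.symm
  calc ∫ s in a..b, ((b - s) / (b - a)) ^ p
      = ∫ s in (0 : ℝ)..(b - a), (s / (b - a)) ^ p := by
        rw [intervalIntegral.integral_comp_sub_left (fun s => (s / (b - a)) ^ p) b, sub_self]
    _ = (b - a) * ∫ r in (0 : ℝ)..1, r ^ p := by
        rw [intervalIntegral.integral_comp_div (fun r => r ^ p) hba, zero_div, div_self hba,
          smul_eq_mul]
    _ = (b - a) / (p + 1) := by
        rw [integral_pow, one_pow, zero_pow p.succ_ne_zero, sub_zero, mul_one_div]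

section Cell

variable {H : Type*} [SeminormedAddCommGroup H] [NormedSpace ℝ H]
  {a b : ℝ} {d : H} {w : ℝ → H}

theorem norm_ramp_pow_eqOn (hab : a ≤ b)
    (hw : ∀ s ∈ Set.Ioc a b, w s = ((b - s) / (b - a)) • d) (p : ℕ) :
    Set.EqOn (fun s => ((b - s) / (b - a)) ^ p * ‖d‖ ^ p) (fun s => ‖w s‖ ^ p)
      (Set.uIoc a b) := by
  intro s hs
  rw [Set.uIoc_of_le hab] at hs
  have ramp_nonneg : 0 ≤ (b - s) / (b - a) :=
    div_nonneg (sub_nonneg.mpr hs.2) (sub_nonneg.mpr hab)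
  simp only [hw s hs, norm_smul_of_nonneg ramp_nonneg, mul_pow]

theorem intervalIntegrable_norm_ramp_pow (hab : a ≤ b)
    (hw : ∀ s ∈ Set.Ioc a b, w s = ((b - s) / (b - a)) • d) (p : ℕ) :
    IntervalIntegrable (fun s => ‖w s‖ ^ p) MeasureTheory.volume a b :=
  (Continuous.intervalIntegrable (by fun_prop) a b).congr (norm_ramp_pow_eqOn hab hw p)

theorem integral_norm_ramp_pow (hab : a ≤ b)
    (hw : ∀ s ∈ Set.Ioc a b, w s = ((b - s) / (b - a)) • d) (p : ℕ) :
    ∫ s in a..b, ‖w s‖ ^ p = (b - a) / (p + 1) * ‖d‖ ^ p := by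
  rw [← intervalIntegral.integral_congr_ae (.of_forall (norm_ramp_pow_eqOn hab hw p)),
    intervalIntegral.integral_mul_const, integral_ramp_pow]

end Cell

section Mesh

variable {H : Type*} [SeminormedAddCommGroup H] [NormedSpace ℝ H]
  {t : ℕ → ℝ} {N : ℕ} {x : ℕ → H}

theorem integral_norm_sub_interpolants_pow (ht : ∀ n < N, t n ≤ t (n + 1)) {u v : ℝ → H}
    (hu : ∀ n < N, ∀ s ∈ Set.Ioc (t n) (t (n + 1)),
      u s = x (n + 1) + ((t (n + 1) - s) / (t (n + 1) - t n)) • (x n - x (n + 1)))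
    (hv : ∀ n < N, ∀ s ∈ Set.Ioc (t n) (t (n + 1)), v s = x (n + 1)) (p : ℕ) :
    ∫ s in t 0..t N, ‖u s - v s‖ ^ p =
      (∑ n ∈ Finset.range N, (t (n + 1) - t n) * ‖x (n + 1) - x n‖ ^ p) / (p + 1) := by
  have sub_eq_ramp (n : ℕ) (hn : n < N) : ∀ s ∈ Set.Ioc (t n) (t (n + 1)),
      u s - v s = ((t (n + 1) - s) / (t (n + 1) - t n)) • (x n - x (n + 1)) := by
    intro s hs
    rw [hu n hn s hs, hv n hn s hs, add_sub_cancel_left]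
  rw [← intervalIntegral.sum_integral_adjacent_intervals fun n hn =>
    intervalIntegrable_norm_ramp_pow (ht n hn) (sub_eq_ramp n hn) p, Finset.sum_div]
  refine Finset.sum_congr rfl fun n hn => ?_
  have hn : n < N := Finset.mem_range.mp hn
  rw [integral_norm_ramp_pow (ht n hn) (sub_eq_ramp n hn), norm_sub_rev, div_mul_eq_mul_div]

theorem sum_step_mul_norm_sub_pow_le {k : ℝ} (ht : ∀ n < N, t n < t (n + 1))
    (hk : ∀ n < N, t (n + 1) - t n ≤ k) (p : ℕ) :
    ∑ n ∈ Finset.range N, (t (n + 1) - t n) * ‖x (n + 1) - x n‖ ^ p ≤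
      (∑ n ∈ Finset.range N,
        (t (n + 1) - t n) ^ p * ‖(t (n + 1) - t n)⁻¹ • (x (n + 1) - x n)‖ ^ p) * k := by
  rw [Finset.sum_mul]
  refine Finset.sum_le_sum fun n hn => ?_
  have hn : n < N := Finset.mem_range.mp hn
  have step_pos : 0 < t (n + 1) - t n := sub_pos.mpr (ht n hn)
  rw [← mul_pow, ← norm_smul_of_nonneg step_pos.le, smul_inv_smul₀ step_pos.ne', mul_comm]
  gcongr
  exact hk n hn

theorem interpolant_discrepancy_general (ht : ∀ n < N, t n < t (n + 1)) {u v : ℝ → H}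
    (hu : ∀ n < N, ∀ s ∈ Set.Ioc (t n) (t (n + 1)),
      u s = x (n + 1) + ((t (n + 1) - s) / (t (n + 1) - t n)) • (x n - x (n + 1)))
    (hv : ∀ n < N, ∀ s ∈ Set.Ioc (t n) (t (n + 1)), v s = x (n + 1)) (p : ℕ) :
    (∫ s in t 0..t N, ‖u s - v s‖ ^ p) =
      (∑ n ∈ Finset.range N, (t (n + 1) - t n) * ‖x (n + 1) - x n‖ ^ p) / (p + 1) ∧
    ∀ C₀ k : ℝ, 0 ≤ k → (∀ n < N, t (n + 1) - t n ≤ k) →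
      ∑ n ∈ Finset.range N,
        (t (n + 1) - t n) ^ p * ‖(t (n + 1) - t n)⁻¹ • (x (n + 1) - x n)‖ ^ p ≤ C₀ →
      (∫ s in t 0..t N, ‖u s - v s‖ ^ p) ≤ C₀ * k / (p + 1) := by
  have identity := integral_norm_sub_interpolants_pow (fun n hn => (ht n hn).le) hu hv p
  refine ⟨identity, fun C₀ k hk hstep hC₀ => ?_⟩
  rw [identity]
  gcongr
  exact (sum_step_mul_norm_sub_pow_le ht hstep p).trans (mul_le_mul_of_nonneg_right hC₀ hk)

end Mesh

theorem sum_Icc_one_eq_sum_range {M : Type*} [AddCommMonoid M] (f : ℕ → M) (N : ℕ) :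
    ∑ n ∈ Finset.Icc 1 N, f n = ∑ n ∈ Finset.range N, f (n + 1) := by
  rw [Finset.range_eq_Ico, Finset.sum_Ico_add', zero_add, Finset.Ico_add_one_right_eq_Icc]

/-- The interpolant-discrepancy identity from Theorem 4.6: if `ũ` is the piecewise-linear
interpolant of the values `xₙ` at times `tₙ = n k` and `uʳ` the piecewise-constant one,
then `∫₀^{Nk} ‖ũ - uʳ‖² = (k/3) ∑ₙ ‖xₙ - x_{n-1}‖²`; consequently, if
`k² ∑ₙ ‖(xₙ - x_{n-1})/k‖² ≤ C₀` then `∫₀^{Nk} ‖ũ - uʳ‖² ≤ C₀ k / 3`. -/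
theorem interpolant_discrepancy
    {H : Type*} [NormedAddCommGroup H] [NormedSpace ℝ H]
    (k : ℝ) (hk : 0 < k) (N : ℕ) (hN : 1 ≤ N) (x : ℕ → H)
    (utilde ur : ℝ → H)
    (hutilde : ∀ n : ℕ, 1 ≤ n → n ≤ N →
      ∀ t ∈ Set.Icc (((n : ℝ) - 1) * k) ((n : ℝ) * k),
        utilde t = x n + ((((n : ℝ) * k - t) / k) : ℝ) • (x (n - 1) - x n))
    (hur : ∀ n : ℕ, 1 ≤ n → n ≤ N →
      ∀ t ∈ Set.Ioc (((n : ℝ) - 1) * k) ((n : ℝ) * k), ur t = x n) :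
    (∫ t in (0 : ℝ)..((N : ℝ) * k), ‖utilde t - ur t‖ ^ 2) =
      (k / 3) * ∑ n ∈ Finset.Icc 1 N, ‖x n - x (n - 1)‖ ^ 2 ∧
    ∀ C₀ : ℝ,
      k ^ 2 * ∑ n ∈ Finset.Icc 1 N, ‖(k⁻¹ : ℝ) • (x n - x (n - 1))‖ ^ 2 ≤ C₀ →
      (∫ t in (0 : ℝ)..((N : ℝ) * k), ‖utilde t - ur t‖ ^ 2) ≤ C₀ * k / 3 := by
  have step_eq (n : ℕ) : ((n + 1 : ℕ) : ℝ) * k - n * k = k := by push_cast; ring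
  have cell_eq (n : ℕ) : Set.Ioc (n * k) ((n + 1 : ℕ) * k) =
      Set.Ioc (((n + 1 : ℕ) - 1 : ℝ) * k) ((n + 1 : ℕ) * k) := by
    rw [Nat.cast_succ, add_sub_cancel_right]
  obtain ⟨identity, bound⟩ := interpolant_discrepancy_general (t := fun n => n * k) (N := N)
    (fun n _ => by linarith [step_eq n])
    (fun n hn s hs => by
      simpa only [step_eq, Nat.add_sub_cancel] using hutilde (n + 1) n.succ_pos hn s
        (Set.Ioc_subset_Icc_self (cell_eq n ▸ hs)))
    (fun n hn s hs => hur (n + 1) n.succ_pos hn s (cell_eq n ▸ hs)) 2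
  have two_add_one : ((2 : ℕ) : ℝ) + 1 = 3 := by norm_num
  simp only [step_eq, ← Finset.mul_sum, Nat.cast_zero, zero_mul, two_add_one] at identity bound
  simp only [sum_Icc_one_eq_sum_range, Nat.add_sub_cancel]
  exact ⟨by rw [identity, mul_div_right_comm], fun C₀ => bound C₀ k hk.le fun _ _ => le_rfl⟩
end
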